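/- Let p be an odd prime, k ≥ 1 an integer, K a field of characteristic p, A = K[x]/(x^{kp}), and B = A ⊗_K A. The graded ring HH^*(A;A) = ⊕_{m≥0} Ext^m_B(A,A), with the Yoneda (composition) product, is isomorphic as a graded ring to K[x,v,t]/(x^{kp}, v²), where x, v, t have cohomological degrees 0, 1, 2 respectively. -/

import Mathlib

open Polynomial TensorProduct CategoryTheory

noncomputable section

/-- `A = K[x]/(x^N)`, the truncated polynomial ring over the field `K`. -/
abbrev A (K : Type) [Field K] (N : ℕ) : Type := AdjoinRoot ((X : K[X]) ^ N)

/-- `B = A ⊗_K A`. -/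
abbrev B (K : Type) [Field K] (N : ℕ) : Type := A K N ⊗[K] A K N

/-- `A` is a `B`-module via the multiplication map `μ(a ⊗ b) = ab`. -/
instance (K : Type) [Field K] (N : ℕ) : Algebra (B K N) (A K N) :=
  (Algebra.TensorProduct.lmul' K (S := A K N)).toRingHom.toAlgebra

instance (K : Type) [Field K] (N : ℕ) : HasDerivedCategory.{1} (ModuleCat.{0} (B K N)) :=
  HasDerivedCategory.standard _

instance (K : Type) [Field K] (N : ℕ) : HasExt.{1} (ModuleCat.{0} (B K N)) :=
  hasExt_of_hasDerivedCategory _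

/-- `A` as an object of the category of `B`-modules. -/
def M (K : Type) [Field K] (N : ℕ) : ModuleCat.{0} (B K N) := ModuleCat.of (B K N) (A K N)

/-- The ideal `(x^N, v²)` of `K[x,v,t]`, where `x = X 0`, `v = X 1`, `t = X 2`. -/
def I (K : Type) [Field K] (N : ℕ) : Ideal (MvPolynomial (Fin 3) K) :=
  Ideal.span {MvPolynomial.X 0 ^ N, MvPolynomial.X 1 ^ 2}

/-- The ring `K[x,v,t]/(x^N, v²)`. -/
abbrev R (K : Type) [Field K] (N : ℕ) : Type := MvPolynomial (Fin 3) K ⧸ I K N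

/-- The degree-`m` component of `R K N`, for the grading in which `x, v, t` have
cohomological degrees `0, 1, 2` respectively. -/
def G (K : Type) [Field K] (N m : ℕ) : Submodule K (R K N) :=
  (MvPolynomial.weightedHomogeneousSubmodule K (![0, 1, 2] : Fin 3 → ℕ) m).map
    (Ideal.Quotient.mkₐ K (I K N)).toLinearMap

/-!
Write `B = A[z]/(z^N)`, so that multiplication `B → A` becomes evaluation at `z = x`. Then `A` has a
two-periodic free resolution over `B` whose differentials are alternately `y = z - x` and
`w = z^N / (z - x)`. Expanding `z^N = (x + y)^N` and using that `N` and `N.choose 2` vanish in `K`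
shows `y³ ∣ z^N` in `A[z]`, so `w = y * u` with `u` acting by zero on `A`.

The resolution splices `0 → W → B → A → 0` and `0 → A → B → W → 0`, with classes `δ₁` and `δ₂`.
All homs `B → A` vanish on `W` and on `A`, so multiplication by `t = δ₁δ₂` is an isomorphism
`Ext^m ≃ Ext^(m+2)`. The augmentation `B → A` is `B → W` followed by a map `φ`, and `v = δ₁φ`
generates `Ext^1`. Multiplication by `u` likewise induces `ψ : A → W`, and `φ`, `ψ` extend to
morphisms between the two short exact sequences. Naturality of `δ₁` and `δ₂` then gives `vt = tv`
and `v² = δ₁δ₂ψφ`, which is zero since `ψφ` is the action of `u` on `A`.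
-/

section PeriodicSplice

universe v' u'

variable {C : Type u'} [Category.{v'} C] [Abelian C] {R : Type*} [CommRing R] [Linear R C]
  {P X : C} {π : P ⟶ X} {y w u : R}

/-- A two-periodic exact sequence `⋯ ⟶ P ⟶ P ⟶ P ⟶ X ⟶ 0`, with augmentation `π` and differentials
alternately `y` and `w`, cut into the short exact sequences `0 ⟶ W ⟶ P ⟶ X ⟶ 0` and
`0 ⟶ X ⟶ P ⟶ W ⟶ 0`. -/
structure PeriodicSplice (y w : R) (π : P ⟶ X) where
  W : C
  i : W ⟶ P
  j : X ⟶ P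
  q : P ⟶ W
  i_comp_π : i ≫ π = 0
  j_comp_q : j ≫ q = 0
  shortExact_i_π : (ShortComplex.mk i π i_comp_π).ShortExact
  shortExact_j_q : (ShortComplex.mk j q j_comp_q).ShortExact
  q_comp_i : q ≫ i = y • 𝟙 P
  π_comp_j : π ≫ j = w • 𝟙 P

theorem exists_shortExact_of_exact {W P Q X : C} {f : P ⟶ Q} {q : Q ⟶ W} {g : Q ⟶ P} {h : P ⟶ X}
    {fq : f ≫ q = 0} {fg : f ≫ g = 0} {gh : g ≫ h = 0} [Epi q] [Epi h]
    (hfq : (ShortComplex.mk f q fq).Exact) (hfg : (ShortComplex.mk f g fg).Exact)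
    (hgh : (ShortComplex.mk g h gh).Exact) :
    ∃ (i : W ⟶ P) (ih : i ≫ h = 0), q ≫ i = g ∧ (ShortComplex.mk i h ih).ShortExact := by
  obtain ⟨i, rfl⟩ : ∃ i, q ≫ i = g := ⟨_, hfq.g_desc g fg⟩
  have ih : i ≫ h = 0 := by rw [← cancel_epi q, ← Category.assoc, gh, Limits.comp_zero]
  have mono_i : Mono i := Preadditive.mono_of_cancel_zero _ fun x hx => by
    obtain ⟨_, ρ, _, z, hz⟩ := surjective_up_to_refinements_of_epi q x
    obtain ⟨_, σ, _, z', hz'⟩ := hfg.exact_up_to_refinements z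
      (by rw [← reassoc_of% hz, hx, Limits.comp_zero])
    have hσρ : σ ≫ ρ ≫ x = 0 := by rw [hz, reassoc_of% hz', fq, Limits.comp_zero]
    exact Limits.zero_of_epi_comp ρ (Limits.zero_of_epi_comp σ hσρ)
  have exact_i_h : (ShortComplex.mk i h ih).Exact :=
    (ShortComplex.exact_iff_of_epi_of_isIso_of_mono (S₁ := ShortComplex.mk (q ≫ i) h gh)
      { τ₁ := q, τ₂ := 𝟙 P, τ₃ := 𝟙 X }).1 hgh
  exact ⟨i, ih, rfl, ⟨exact_i_h⟩⟩

theorem nonempty_periodicSplice [Epi π] {yw : (y • 𝟙 P) ≫ (w • 𝟙 P) = 0}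
    {wy : (w • 𝟙 P) ≫ (y • 𝟙 P) = 0} {yπ : (y • 𝟙 P) ≫ π = 0}
    (hyw : (ShortComplex.mk _ _ yw).Exact) (hwy : (ShortComplex.mk _ _ wy).Exact)
    (hyπ : (ShortComplex.mk _ _ yπ).Exact) : Nonempty (PeriodicSplice y w π) := by
  have hwq := ShortComplex.exact_cokernel (w • 𝟙 P)
  obtain ⟨i, iπ, qi, hi⟩ := exists_shortExact_of_exact hwq hwy hyπ
  obtain ⟨j, jq, πj, hj⟩ := exists_shortExact_of_exact hyπ hyw hwq
  exact ⟨⟨_, i, j, _, iπ, jq, hi, hj, qi, πj⟩⟩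

namespace PeriodicSplice

theorem epi_π (s : PeriodicSplice y w π) : Epi π := s.shortExact_i_π.epi_g

theorem epi_q (s : PeriodicSplice y w π) : Epi s.q := s.shortExact_j_q.epi_g

theorem y_smul_π (s : PeriodicSplice y w π) : y • π = 0 := by
  have h := s.q_comp_i =≫ π
  rwa [Category.assoc, s.i_comp_π, Limits.comp_zero, Linear.smul_comp, Category.id_comp,
    eq_comm] at h

theorem w_smul_q (s : PeriodicSplice y w π) : w • s.q = 0 := by
  have h := s.π_comp_j =≫ s.q
  rwa [Category.assoc, s.j_comp_q, Limits.comp_zero, Linear.smul_comp, Category.id_comp,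
    eq_comm] at h

theorem exists_smul_π_eq [Projective P] (s : PeriodicSplice y w π)
    (hP : ∀ f : P ⟶ P, ∃ r : R, r • 𝟙 P = f) (f : P ⟶ X) : ∃ r : R, r • π = f := by
  have := s.epi_π
  obtain ⟨r, hr⟩ := hP (Projective.factorThru f π)
  exact ⟨r, by simpa [← hr] using Projective.factorThru_comp f π⟩

theorem exists_smul_id_eq [Projective P] (s : PeriodicSplice y w π)
    (hP : ∀ f : P ⟶ P, ∃ r : R, r • 𝟙 P = f) (f : X ⟶ X) : ∃ r : R, r • 𝟙 X = f := by
  have := s.epi_π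
  obtain ⟨r, hr⟩ := s.exists_smul_π_eq hP (π ≫ f)
  exact ⟨r, by simp [← cancel_epi π, hr]⟩

theorem i_comp_eq_zero [Projective P] (s : PeriodicSplice y w π)
    (hP : ∀ f : P ⟶ P, ∃ r : R, r • 𝟙 P = f) (f : P ⟶ X) : s.i ≫ f = 0 := by
  obtain ⟨r, rfl⟩ := s.exists_smul_π_eq hP f
  rw [Linear.comp_smul, s.i_comp_π, smul_zero]

theorem j_comp_π (s : PeriodicSplice y (y * u) π) : s.j ≫ π = 0 := by
  have := s.epi_π
  rw [← cancel_epi π, ← Category.assoc, s.π_comp_j, Linear.smul_comp, Category.id_comp, mul_comm,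
    mul_smul, s.y_smul_π, smul_zero, Limits.comp_zero]

theorem j_comp_eq_zero [Projective P] (s : PeriodicSplice y (y * u) π)
    (hP : ∀ f : P ⟶ P, ∃ r : R, r • 𝟙 P = f) (f : P ⟶ X) : s.j ≫ f = 0 := by
  obtain ⟨r, rfl⟩ := s.exists_smul_π_eq hP f
  rw [Linear.comp_smul, s.j_comp_π, smul_zero]

theorem i_comp_smul_q (s : PeriodicSplice y (y * u) π) : s.i ≫ (u • s.q) = 0 := by
  have := s.epi_q
  rw [← cancel_epi s.q, reassoc_of% s.q_comp_i, Linear.smul_comp, Category.id_comp, smul_smul,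
    s.w_smul_q, Limits.comp_zero]

theorem exists_comparison (s : PeriodicSplice y (y * u) π) (hu : u • π = 0) :
    ∃ (φ : s.W ⟶ X) (ψ : X ⟶ s.W), s.q ≫ φ = π ∧ π ≫ ψ = u • s.q ∧
      φ ≫ s.j = u • s.i ∧ ψ ≫ s.i = s.j ∧ ψ ≫ φ = 0 := by
  have := s.epi_π
  have := s.epi_q
  obtain ⟨φ, hφ⟩ : ∃ φ, s.q ≫ φ = π := ⟨_, s.shortExact_j_q.exact.g_desc π s.j_comp_π⟩
  obtain ⟨ψ, hψ⟩ : ∃ ψ, π ≫ ψ = u • s.q :=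
    ⟨_, s.shortExact_i_π.exact.g_desc (u • s.q) s.i_comp_smul_q⟩
  refine ⟨φ, ψ, hφ, hψ, ?_, ?_, ?_⟩
  · rw [← cancel_epi s.q, reassoc_of% hφ, s.π_comp_j, Linear.comp_smul, s.q_comp_i, mul_comm,
      mul_smul]
  · rw [← cancel_epi π, reassoc_of% hψ, s.π_comp_j, Linear.smul_comp, s.q_comp_i, mul_comm,
      mul_smul]
  · rw [← cancel_epi π, reassoc_of% hψ, Linear.smul_comp, hφ, hu, Limits.comp_zero]

end PeriodicSplice

end PeriodicSplice

section ExtAlgebra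

universe w v u

open Abelian

variable {C : Type u} [Category.{v} C] [Abelian C] [HasExt.{w} C]

theorem extClass_comp_bijective {S : ShortComplex C} (hS : S.ShortExact) [Projective S.X₂] {Y : C}
    (hY : ∀ f : S.X₂ ⟶ Y, S.f ≫ f = 0) {m n : ℕ} (h : 1 + m = n) :
    Function.Bijective (fun α : Ext S.X₁ Y m => hS.extClass.comp α h) := by
  constructor
  · refine (injective_iff_map_eq_zero (hS.extClass.precomp Y h)).2 fun α hα => ?_
    obtain ⟨β, rfl⟩ := Ext.contravariant_sequence_exact₁ hS Y α h hα
    rcases m with _ | m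
    · obtain ⟨f, rfl⟩ := (Ext.mk₀_bijective _ _).2 β
      rw [Ext.mk₀_comp_mk₀, hY, Ext.mk₀_zero]
    · rw [Ext.eq_zero_of_projective β, Ext.comp_zero]
  · intro β
    obtain rfl : n = m + 1 := by omega
    exact Ext.contravariant_sequence_exact₃ hS Y β (Ext.eq_zero_of_projective _) h

section Monomials

variable {X : C}

/-- The monomial of degree `m` in classes `v`, `t` of degrees `1`, `2` in which `v` occurs at most
once: `1, v, t, tv, t², t²v, …`. -/
def extMonomial (v : Ext X X 1) (t : Ext X X 2) : ∀ m : ℕ, Ext X X m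
  | 0 => Ext.mk₀ (𝟙 X)
  | 1 => v
  | m + 2 => t.comp (extMonomial v t m) (add_comm 2 m)

variable {v : Ext X X 1} {t : Ext X X 2}

theorem comp_extMonomial (hvv : v.comp v one_add_one_eq_two = 0)
    (hvt : v.comp t (by rfl : 1 + 2 = 3) = t.comp v (by rfl)) :
    ∀ {b c : ℕ} (h : 1 + b = c),
      v.comp (extMonomial v t b) h = if Odd b then 0 else extMonomial v t c
  | 0, c, h => by
    obtain rfl : c = 1 := by omega
    simp [extMonomial]
  | 1, c, h => by
    obtain rfl : c = 2 := by omega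
    simp [extMonomial, hvv]
  | b + 2, c, h => by
    obtain ⟨c, rfl⟩ : ∃ d, c = d + 2 := ⟨c - 2, by omega⟩
    have hbc : 1 + b = c := by omega
    have swap : v.comp (extMonomial v t (b + 2)) h =
        t.comp (v.comp (extMonomial v t b) hbc) (add_comm 2 c) := by
      rw [extMonomial, ← Ext.comp_assoc v t _ (by rfl : 1 + 2 = 3) _ (by omega), hvt,
        Ext.comp_assoc t v _ _ hbc (by omega)]
    rw [swap, comp_extMonomial hvv hvt hbc]
    split_ifs <;> first | grind | simp [extMonomial]

theorem extMonomial_comp_extMonomial (hvv : v.comp v one_add_one_eq_two = 0)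
    (hvt : v.comp t (by rfl : 1 + 2 = 3) = t.comp v (by rfl)) :
    ∀ {a b c : ℕ} (h : a + b = c), (extMonomial v t a).comp (extMonomial v t b) h =
      if Odd a ∧ Odd b then 0 else extMonomial v t c
  | 0, b, c, h => by
    obtain rfl : b = c := by omega
    simp [extMonomial]
  | 1, b, c, h => by
    simpa [extMonomial] using comp_extMonomial hvv hvt h
  | a + 2, b, c, h => by
    obtain ⟨c, rfl⟩ : ∃ d, c = d + 2 := ⟨c - 2, by omega⟩
    have hac : a + b = c := by omega
    rw [extMonomial, Ext.comp_assoc t _ _ _ hac (by omega),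
      extMonomial_comp_extMonomial hvv hvt hac]
    split_ifs <;> first | grind | simp [extMonomial]

variable {R : Type*} [CommRing R] [Linear R C]

theorem smul_extMonomial_surjective
    (ht : ∀ m, Function.Surjective (fun α : Ext X X m => t.comp α (add_comm 2 m)))
    (hX : ∀ f : X ⟶ X, ∃ r : R, r • 𝟙 X = f) (hv : ∀ α : Ext X X 1, ∃ r : R, r • v = α) :
    ∀ m, Function.Surjective (fun r : R => r • extMonomial v t m)
  | 0 => fun α => by
    obtain ⟨f, rfl⟩ := (Ext.mk₀_bijective _ _).2 α
    obtain ⟨r, rfl⟩ := hX f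
    exact ⟨r, (Ext.mk₀_smul r (𝟙 X)).symm⟩
  | 1 => hv
  | m + 2 => fun α => by
    obtain ⟨β, rfl⟩ := ht m α
    obtain ⟨r, rfl⟩ := smul_extMonomial_surjective ht hX hv m β
    exact ⟨r, (Ext.comp_smul ..).symm⟩

theorem smul_extMonomial_eq_zero_iff
    (ht : ∀ m, Function.Injective (fun α : Ext X X m => t.comp α (add_comm 2 m)))
    (hv : ∀ r : R, r • v = 0 ↔ r • 𝟙 X = 0) (r : R) :
    ∀ m, r • extMonomial v t m = 0 ↔ r • 𝟙 X = 0
  | 0 => by rw [extMonomial, ← Ext.mk₀_smul, Ext.mk₀_eq_zero_iff]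
  | 1 => hv r
  | m + 2 => by
    rw [← smul_extMonomial_eq_zero_iff ht hv r m, extMonomial, ← Ext.comp_smul, ← (ht m).eq_iff]
    simp only [Ext.comp_zero]

end Monomials

section Naturality

variable {X W : C} {δ₁ : Ext X W 1} {δ₂ : Ext W X 1} {φ : W ⟶ X} {ψ : X ⟶ W}

theorem comp_mk₀_comp_eq_comp_comp_mk₀
    (h₂ : δ₂.comp (Ext.mk₀ ψ) (add_zero 1) = (Ext.mk₀ φ).comp δ₁ (zero_add 1)) :
    (δ₁.comp (Ext.mk₀ φ) (add_zero 1)).comp δ₁ one_add_one_eq_two =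
      (δ₁.comp δ₂ one_add_one_eq_two).comp (Ext.mk₀ ψ) (add_zero 2) := by
  rw [Ext.comp_assoc_of_second_deg_zero, ← h₂, Ext.comp_assoc_of_third_deg_zero]

theorem comp_mk₀_comp_self_eq_zero
    (h₂ : δ₂.comp (Ext.mk₀ ψ) (add_zero 1) = (Ext.mk₀ φ).comp δ₁ (zero_add 1)) (hψφ : ψ ≫ φ = 0) :
    (δ₁.comp (Ext.mk₀ φ) (add_zero 1)).comp (δ₁.comp (Ext.mk₀ φ) (add_zero 1))
      one_add_one_eq_two = 0 := by
  rw [← Ext.comp_assoc_of_third_deg_zero, comp_mk₀_comp_eq_comp_comp_mk₀ h₂,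
    Ext.comp_assoc_of_third_deg_zero, Ext.mk₀_comp_mk₀, hψφ, Ext.mk₀_zero, Ext.comp_zero]

theorem comp_mk₀_comp_comp_comm
    (h₁ : δ₁.comp (Ext.mk₀ φ) (add_zero 1) = (Ext.mk₀ ψ).comp δ₂ (zero_add 1))
    (h₂ : δ₂.comp (Ext.mk₀ ψ) (add_zero 1) = (Ext.mk₀ φ).comp δ₁ (zero_add 1)) :
    (δ₁.comp (Ext.mk₀ φ) (add_zero 1)).comp (δ₁.comp δ₂ one_add_one_eq_two)
        (by rfl : 1 + 2 = 3) =
      (δ₁.comp δ₂ one_add_one_eq_two).comp (δ₁.comp (Ext.mk₀ φ) (add_zero 1)) (by rfl) := by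
  rw [← Ext.comp_assoc _ δ₁ δ₂ one_add_one_eq_two _ (by rfl), comp_mk₀_comp_eq_comp_comp_mk₀ h₂,
    Ext.comp_assoc_of_second_deg_zero, ← h₁]

end Naturality

namespace PeriodicSplice

variable {R : Type*} [CommRing R] [Linear R C] {P X : C} {π : P ⟶ X} {y w u : R}

theorem exists_comparison_extClass (s : PeriodicSplice y (y * u) π) (hu : u • π = 0) :
    ∃ (φ : s.W ⟶ X) (ψ : X ⟶ s.W), s.q ≫ φ = π ∧ ψ ≫ φ = 0 ∧
      s.shortExact_i_π.extClass.comp (Ext.mk₀ φ) (add_zero 1) =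
        (Ext.mk₀ ψ).comp s.shortExact_j_q.extClass (zero_add 1) ∧
      s.shortExact_j_q.extClass.comp (Ext.mk₀ ψ) (add_zero 1) =
        (Ext.mk₀ φ).comp s.shortExact_i_π.extClass (zero_add 1) := by
  obtain ⟨φ, ψ, hφ, hψ, hφj, hψi, hψφ⟩ := s.exists_comparison hu
  exact ⟨φ, ψ, hφ, hψφ,
    s.shortExact_i_π.extClass_naturality s.shortExact_j_q
      { τ₁ := φ
        τ₂ := u • 𝟙 P
        τ₃ := ψ
        comm₁₂ := by simpa using hφj
        comm₂₃ := by simpa using hψ.symm },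
    s.shortExact_j_q.extClass_naturality s.shortExact_i_π
      { τ₁ := ψ
        τ₂ := 𝟙 P
        τ₃ := φ
        comm₁₂ := by simpa using hψi
        comm₂₃ := by simpa using hφ.symm }⟩

variable [Projective P]

theorem extClass_comp_extClass_comp_bijective (s : PeriodicSplice y (y * u) π)
    (hP : ∀ f : P ⟶ P, ∃ r : R, r • 𝟙 P = f) (m : ℕ) :
    Function.Bijective fun α : Ext X X m =>
      (s.shortExact_i_π.extClass.comp s.shortExact_j_q.extClass one_add_one_eq_two).comp α
        (add_comm 2 m) := by
  convert (extClass_comp_bijective s.shortExact_i_π (s.i_comp_eq_zero hP)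
      (by omega : 1 + (m + 1) = m + 2)).comp
    (extClass_comp_bijective s.shortExact_j_q (s.j_comp_eq_zero hP) (add_comm 1 m)) using 2
  exact Ext.comp_assoc _ _ _ _ _ (by omega)

theorem exists_smul_extClass_comp_eq (s : PeriodicSplice y w π)
    (hP : ∀ f : P ⟶ P, ∃ r : R, r • 𝟙 P = f) {φ : s.W ⟶ X} (hφ : s.q ≫ φ = π) (α : Ext X X 1) :
    ∃ r : R, r • s.shortExact_i_π.extClass.comp (Ext.mk₀ φ) (add_zero 1) = α := by
  obtain ⟨β, rfl⟩ :=
    (extClass_comp_bijective s.shortExact_i_π (s.i_comp_eq_zero hP) (add_zero 1)).2 α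
  obtain ⟨f, rfl⟩ := (Ext.mk₀_bijective _ _).2 β
  obtain ⟨r, hr⟩ := s.exists_smul_π_eq hP (s.q ≫ f)
  have := s.epi_q
  have hf : r • φ = f := by rw [← cancel_epi s.q, Linear.comp_smul, hφ, hr]
  exact ⟨r, by rw [← hf, Ext.mk₀_smul]; exact (Ext.comp_smul ..).symm⟩

theorem smul_extClass_comp_eq_zero_iff (s : PeriodicSplice y w π)
    (hP : ∀ f : P ⟶ P, ∃ r : R, r • 𝟙 P = f) {φ : s.W ⟶ X} (hφ : s.q ≫ φ = π) (r : R) :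
    r • s.shortExact_i_π.extClass.comp (Ext.mk₀ φ) (add_zero 1) = 0 ↔ r • 𝟙 X = 0 := by
  have := s.epi_π
  have := s.epi_q
  have δ_inj : Function.Injective _ :=
    (extClass_comp_bijective s.shortExact_i_π (s.i_comp_eq_zero hP) (add_zero 1)).1
  calc r • s.shortExact_i_π.extClass.comp (Ext.mk₀ φ) (add_zero 1) = 0
    _ ↔ r • φ = 0 := by
      rw [← Ext.comp_smul, ← Ext.mk₀_smul, ← Ext.mk₀_eq_zero_iff, ← δ_inj.eq_iff]
      simp only [Ext.comp_zero]
    _ ↔ r • π = 0 := by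
      rw [← cancel_epi s.q, Linear.comp_smul, hφ, Limits.comp_zero]
    _ ↔ r • 𝟙 X = 0 := by
      rw [← cancel_epi π, Linear.comp_smul, Category.comp_id, Limits.comp_zero]

theorem exists_ext_generators (s : PeriodicSplice y (y * u) π)
    (hP : ∀ f : P ⟶ P, ∃ r : R, r • 𝟙 P = f) (hu : u • π = 0) :
    ∃ (v : Ext X X 1) (t : Ext X X 2), v.comp v one_add_one_eq_two = 0 ∧
      v.comp t (by rfl : 1 + 2 = 3) = t.comp v (by rfl) ∧
      (∀ m, Function.Surjective fun r : R => r • extMonomial v t m) ∧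
      ∀ (r : R) (m : ℕ), r • extMonomial v t m = 0 ↔ r • 𝟙 X = 0 := by
  obtain ⟨φ, ψ, hφ, hψφ, h₁, h₂⟩ := s.exists_comparison_extClass hu
  have ht := s.extClass_comp_extClass_comp_bijective hP
  exact ⟨_, _, comp_mk₀_comp_self_eq_zero h₂ hψφ, comp_mk₀_comp_comp_comm h₁ h₂,
    smul_extMonomial_surjective (fun m => (ht m).2) (s.exists_smul_id_eq hP)
      (s.exists_smul_extClass_comp_eq hP hφ),
    smul_extMonomial_eq_zero_iff (fun m => (ht m).1) (s.smul_extClass_comp_eq_zero_iff hP hφ)⟩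

end PeriodicSplice

end ExtAlgebra

section CyclicModule

theorem exists_linearEquiv_apply_eq {R M N L : Type*} [Ring R] [AddCommGroup M] [AddCommGroup N]
    [AddCommGroup L] [Module R M] [Module R N] [Module R L] {f : M →ₗ[R] N} {g : M →ₗ[R] L}
    (hf : Function.Surjective f) (hg : Function.Surjective g)
    (h : LinearMap.ker f = LinearMap.ker g) : ∃ e : N ≃ₗ[R] L, ∀ m, e (f m) = g m := by
  refine ⟨(f.quotKerEquivOfSurjective hf).symm ≪≫ₗ Submodule.quotEquivOfEq _ _ h ≪≫ₗ
    g.quotKerEquivOfSurjective hg, fun m => ?_⟩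
  have hm : (f.quotKerEquivOfSurjective hf).symm (f m) = Submodule.Quotient.mk m := by
    rw [LinearEquiv.symm_apply_eq, LinearMap.quotKerEquivOfSurjective_apply_mk]
  simp [hm]

universe w u

open Abelian

variable {B A : Type u} [CommRing B] [CommRing A] [Algebra B A] {y w u : B}

theorem nonempty_periodicSplice_of_function_exact (hA : Function.Surjective (algebraMap B A))
    (hyw : Function.Exact (y * ·) (w * ·)) (hwy : Function.Exact (w * ·) (y * ·))
    (hyA : Function.Exact (y * ·) (algebraMap B A)) :
    Nonempty (PeriodicSplice y w (ModuleCat.ofHom (Algebra.linearMap B A))) := by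
  have : Epi (ModuleCat.ofHom (Algebra.linearMap B A)) := (ModuleCat.epi_iff_surjective _).2 hA
  have comp_eq_zero {a b : B} (h : Function.Exact (a * ·) (b * ·)) :
      (a • 𝟙 (ModuleCat.of B B)) ≫ (b • 𝟙 (ModuleCat.of B B)) = 0 := by
    ext
    simpa using (h _).2 ⟨1, rfl⟩
  have yA : (y • 𝟙 (ModuleCat.of B B)) ≫ ModuleCat.ofHom (Algebra.linearMap B A) = 0 := by
    ext
    simpa [Algebra.smul_def] using (hyA _).2 ⟨1, rfl⟩
  exact nonempty_periodicSplice (yw := comp_eq_zero hyw) (wy := comp_eq_zero hwy) (yπ := yA)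
    ((ShortComplex.ShortExact.moduleCat_exact_iff_function_exact _).2 hyw)
    ((ShortComplex.ShortExact.moduleCat_exact_iff_function_exact _).2 hwy)
    ((ShortComplex.ShortExact.moduleCat_exact_iff_function_exact _).2 hyA)

theorem exists_linearEquiv_ext_of_function_exact [HasExt.{w} (ModuleCat.{u} B)]
    (hA : Function.Surjective (algebraMap B A)) (hyw : Function.Exact (y * ·) (y * u * ·))
    (hwy : Function.Exact (y * u * ·) (y * ·)) (hyA : Function.Exact (y * ·) (algebraMap B A))
    (hu : algebraMap B A u = 0) :
    ∃ Φ : ∀ m : ℕ, A ≃ₗ[B] Ext (ModuleCat.of B A) (ModuleCat.of B A) m,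
      Φ 0 1 = Ext.mk₀ (𝟙 _) ∧
      ∀ (a b : ℕ) (x x' : A), (Φ a x).comp (Φ b x') rfl =
        if Odd a ∧ Odd b then 0 else Φ (a + b) (x * x') := by
  obtain ⟨s⟩ := nonempty_periodicSplice_of_function_exact hA hyw hwy hyA
  have : Projective (ModuleCat.of B B) :=
    (IsProjective.iff_projective (R := B) B).1 inferInstance
  have hP (f : ModuleCat.of B B ⟶ ModuleCat.of B B) : ∃ r : B, r • 𝟙 _ = f :=
    ⟨f.hom 1, by ext; simp⟩
  have uA : u • ModuleCat.ofHom (Algebra.linearMap B A) = 0 := by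
    ext
    simpa [Algebra.smul_def] using hu
  obtain ⟨v, t, hvv, hvt, hsurj, hker⟩ := s.exists_ext_generators hP uA
  have ker_eq (m : ℕ) : LinearMap.ker (Algebra.linearMap B A) =
      LinearMap.ker (LinearMap.toSpanSingleton B _ (extMonomial v t m)) := by
    ext r
    rw [LinearMap.mem_ker, LinearMap.mem_ker, LinearMap.toSpanSingleton_apply, hker r m,
      Algebra.linearMap_apply]
    refine ⟨fun hr => by ext; simp [Algebra.smul_def, hr], fun hr => ?_⟩
    simpa [Algebra.smul_def] using ConcreteCategory.congr_hom hr (1 : A)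
  choose Φ hΦ using fun m => exists_linearEquiv_apply_eq hA (hsurj m) (ker_eq m)
  refine ⟨Φ, by simpa [extMonomial] using hΦ 0 1, fun a b x x' => ?_⟩
  obtain ⟨r, rfl⟩ := hA x
  obtain ⟨r', rfl⟩ := hA x'
  have hΦ' (m : ℕ) (r : B) : Φ m (algebraMap B A r) = r • extMonomial v t m := hΦ m r
  rw [← map_mul, hΦ', hΦ', hΦ', Ext.comp_smul, Ext.smul_comp, smul_smul, mul_comm r',
    extMonomial_comp_extMonomial hvv hvt, smul_ite, smul_zero]

end CyclicModule

section Hypersurface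

theorem function_exact_mul_of_ker_eq_span {S B : Type*} [CommRing S] [CommRing B] {θ : S →+* B}
    (hθ : Function.Surjective θ) {a g : S} (hg : g ∈ nonZeroDivisors S)
    (hker : RingHom.ker θ = Ideal.span {a * g}) : Function.Exact (θ a * ·) (θ g * ·) := by
  intro b
  obtain ⟨s, rfl⟩ := hθ b
  have mem_ker_iff (r : S) : θ r = 0 ↔ a * g ∣ r := by
    rw [← RingHom.mem_ker, hker, Ideal.mem_span_singleton]
  change θ g * θ s = 0 ↔ ∃ b, θ a * b = θ s
  constructor
  · intro hs
    have hdvd : g * a ∣ g * s := by rwa [← map_mul, mem_ker_iff, mul_comm] at hs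
    obtain ⟨c, rfl⟩ := (dvd_cancel_left_mem_nonZeroDivisors hg).1 hdvd
    exact ⟨θ c, (map_mul θ a c).symm⟩
  · rintro ⟨b, hb⟩
    have hag : θ g * θ a = 0 := by rw [← map_mul, mem_ker_iff, mul_comm]
    rw [← hb, ← mul_assoc, hag, zero_mul]

universe w u

theorem exists_linearEquiv_ext_of_cube_dvd {S : Type*} {B A : Type u} [CommRing S] [CommRing B]
    [CommRing A] [Algebra B A] [HasExt.{w} (ModuleCat.{u} B)] {θ : S →+* B} {a f : S}
    (hθ : Function.Surjective θ) (hA : Function.Surjective (algebraMap B A))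
    (hf : f ∈ nonZeroDivisors S) (haf : a ^ 3 ∣ f) (hker : RingHom.ker θ = Ideal.span {f})
    (hkerA : RingHom.ker ((algebraMap B A).comp θ) = Ideal.span {a}) :
    ∃ Φ : ∀ m : ℕ, A ≃ₗ[B] Abelian.Ext (ModuleCat.of B A) (ModuleCat.of B A) m,
      Φ 0 1 = Abelian.Ext.mk₀ (𝟙 _) ∧
      ∀ (b c : ℕ) (x x' : A), (Φ b x).comp (Φ c x') rfl =
        if Odd b ∧ Odd c then 0 else Φ (b + c) (x * x') := by
  obtain ⟨g, rfl⟩ := haf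
  have hag : a ^ 3 * g = a * (a * (a * g)) := by ring
  rw [hag] at hf hker
  obtain ⟨ha, hw⟩ := mul_mem_nonZeroDivisors.1 hf
  have mem_ker_iff (s : S) : algebraMap B A (θ s) = 0 ↔ a ∣ s := by
    rw [← Ideal.mem_span_singleton, ← hkerA, RingHom.mem_ker, RingHom.comp_apply]
  refine exists_linearEquiv_ext_of_function_exact (y := θ a) (u := θ (a * g)) hA ?_ ?_ ?_ ?_
  · simpa only [map_mul] using function_exact_mul_of_ker_eq_span hθ hw hker
  · rw [mul_comm] at hker
    simpa only [map_mul] using function_exact_mul_of_ker_eq_span hθ ha hker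
  · intro b
    obtain ⟨s, rfl⟩ := hθ b
    constructor
    · intro hs
      obtain ⟨c, rfl⟩ := (mem_ker_iff s).1 hs
      exact ⟨θ c, (map_mul θ a c).symm⟩
    · rintro ⟨b, hb⟩
      rw [← hb, map_mul, (mem_ker_iff a).2 dvd_rfl, zero_mul]
  · exact (mem_ker_iff _).2 ⟨g, rfl⟩

end Hypersurface

section TensorAdjoinRoot

theorem X_sub_C_pow_three_dvd_X_pow {R : Type*} [CommRing R] {x : R} {n : ℕ} (hx : x ^ n = 0)
    (hn : (n : R) = 0) (hn₂ : (n.choose 2 : R) = 0) : (X - C x) ^ 3 ∣ (X : R[X]) ^ n := by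
  rw [X_sub_C_pow_dvd_iff, X_pow_comp, X_pow_dvd_iff]
  intro d hd
  rw [coeff_X_add_C_pow]
  interval_cases d <;> simp [*]

variable (K : Type*) [CommRing K] (T : Type*) [CommRing T] [Algebra K T] (f : K[X])

/-- Base change of `K[x]/(f)`: the isomorphism `T ⊗ K[x]/(f) ≃ T[x]/(f)`. -/
def tensorAdjoinRootEquiv : T ⊗[K] AdjoinRoot f ≃ₐ[T] AdjoinRoot (f.map (algebraMap K T)) :=
  (AdjoinRoot.tensorAlgEquiv f _ rfl).trans
    (AdjoinRoot.mapAlgEquiv (Algebra.TensorProduct.rid K T T) _ _ <| by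
      rw [Polynomial.map_map]
      exact .of_eq (congrArg f.map (RingHom.ext fun a => by simp [Algebra.algebraMap_eq_smul_one])))

theorem tensorAdjoinRootEquiv_aeval (P : T[X]) :
    tensorAdjoinRootEquiv K T f (aeval (1 ⊗ₜ AdjoinRoot.root f) P) =
      AdjoinRoot.mk (f.map (algebraMap K T)) P := by
  rw [← aeval_algHom_apply, tensorAdjoinRootEquiv, AlgEquiv.trans_apply,
    AdjoinRoot.tensorAlgEquiv_root, AdjoinRoot.coe_mapAlgEquiv, AdjoinRoot.map_root,
    AdjoinRoot.aeval_eq]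

variable {K T f}

theorem aeval_one_tmul_root_surjective :
    Function.Surjective (aeval (1 ⊗ₜ AdjoinRoot.root f) : T[X] →ₐ[T] T ⊗[K] AdjoinRoot f) := by
  intro z
  obtain ⟨P, hP⟩ := AdjoinRoot.mk_surjective (tensorAdjoinRootEquiv K T f z)
  exact ⟨P, (tensorAdjoinRootEquiv K T f).injective
    ((tensorAdjoinRootEquiv_aeval K T f P).trans hP)⟩

theorem ker_aeval_one_tmul_root :
    RingHom.ker (aeval (1 ⊗ₜ AdjoinRoot.root f) : T[X] →ₐ[T] T ⊗[K] AdjoinRoot f) =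
      Ideal.span {f.map (algebraMap K T)} := by
  ext P
  rw [RingHom.mem_ker, ← EmbeddingLike.map_eq_zero_iff (f := tensorAdjoinRootEquiv K T f),
    tensorAdjoinRootEquiv_aeval, AdjoinRoot.mk_eq_zero, Ideal.mem_span_singleton]

theorem lmul'_aeval_one_tmul (x : T) (P : T[X]) :
    Algebra.TensorProduct.lmul' K (aeval (1 ⊗ₜ x : T ⊗[K] T) P) = P.eval x := by
  induction P using Polynomial.induction_on' with
  | add P Q hP hQ => simp only [map_add, eval_add, hP, hQ]
  | monomial n a => simp [aeval_monomial]

end TensorAdjoinRoot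

section Truncated

variable (K : Type) [Field K] (N : ℕ)

theorem root_pow_eq_zero : (AdjoinRoot.root (X ^ N) : A K N) ^ N = 0 := by
  simpa using AdjoinRoot.eval₂_root ((X : K[X]) ^ N)

theorem exists_linearEquiv_ext_M (hN : (N : K) = 0) (hN₂ : (N.choose 2 : K) = 0) :
    ∃ Φ : ∀ m : ℕ, A K N ≃ₗ[B K N] Abelian.Ext (M K N) (M K N) m,
      Φ 0 1 = Abelian.Ext.mk₀ (𝟙 _) ∧
      ∀ (a b : ℕ) (x y : A K N), (Φ a x).comp (Φ b y) rfl =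
        if Odd a ∧ Odd b then 0 else Φ (a + b) (x * y) := by
  let x : A K N := AdjoinRoot.root _
  have cast_eq_zero {n : ℕ} (hn : (n : K) = 0) : (n : A K N) = 0 := by
    rw [← map_natCast (algebraMap K (A K N)), hn, map_zero]
  have cube_dvd : (X - C x) ^ 3 ∣ (X : (A K N)[X]) ^ N :=
    X_sub_C_pow_three_dvd_X_pow (root_pow_eq_zero K N) (cast_eq_zero hN) (cast_eq_zero hN₂)
  refine exists_linearEquiv_ext_of_cube_dvd
    (θ := (aeval (1 ⊗ₜ x) : (A K N)[X] →ₐ[A K N] B K N).toRingHom)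
    aeval_one_tmul_root_surjective (fun a => ⟨1 ⊗ₜ a, ?_⟩)
    (monic_X_pow N).mem_nonZeroDivisors cube_dvd ?_ ?_
  · exact (Algebra.TensorProduct.lmul'_apply_tmul 1 a).trans (one_mul a)
  · ext P
    simpa using SetLike.ext_iff.1 (ker_aeval_one_tmul_root (T := A K N) (f := X ^ N)) P
  · rw [← ker_evalRingHom]
    exact congrArg _ (RingHom.ext fun P => lmul'_aeval_one_tmul x P)

end Truncated

section GradedRing

variable (K : Type) [Field K] (N : ℕ)

/-- The classes of the variables `x, v, t` in `R K N`, for `i = 0, 1, 2` respectively. -/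
def gen (i : Fin 3) : R K N := Ideal.Quotient.mkₐ K (I K N) (MvPolynomial.X i)

theorem gen_zero_pow : gen K N 0 ^ N = 0 :=
  Ideal.Quotient.eq_zero_iff_mem.2 (Ideal.subset_span (by simp))

theorem gen_one_sq : gen K N 1 ^ 2 = 0 :=
  Ideal.Quotient.eq_zero_iff_mem.2 (Ideal.subset_span (by simp))

theorem mk_monomial (s : Fin 3 →₀ ℕ) (c : K) :
    Ideal.Quotient.mkₐ K (I K N) (MvPolynomial.monomial s c) =
      c • (gen K N 0 ^ s 0 * (gen K N 1 ^ s 1 * gen K N 2 ^ s 2)) := by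
  rw [MvPolynomial.monomial_eq, Finsupp.prod_fintype _ _ (by simp), Fin.prod_univ_three,
    ← MvPolynomial.smul_eq_C_mul, map_smul, mul_assoc]
  simp only [map_mul, map_pow, gen]

/-- The inclusion `K[x]/(x^N) → K[x,v,t]/(x^N, v²)` sending `x` to `x`. -/
def ofA : A K N →ₐ[K] R K N :=
  AdjoinRoot.liftAlgHom _ (Algebra.ofId K (R K N)) (gen K N 0) (by simp [gen_zero_pow])

theorem ofA_root : ofA K N (AdjoinRoot.root _) = gen K N 0 := by simp [ofA]

/-- The monomial of degree `m` in `v` and `t` that is not divisible by `v²`. -/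
def vtMonomial (m : ℕ) : R K N := gen K N 1 ^ (m % 2) * gen K N 2 ^ (m / 2)

theorem vtMonomial_zero : vtMonomial K N 0 = 1 := by simp [vtMonomial]

theorem vtMonomial_mul (a b : ℕ) : vtMonomial K N a * vtMonomial K N b =
    if Odd a ∧ Odd b then 0 else vtMonomial K N (a + b) := by
  have mul_eq : vtMonomial K N a * vtMonomial K N b =
      gen K N 1 ^ (a % 2 + b % 2) * gen K N 2 ^ (a / 2 + b / 2) := by
    simp only [vtMonomial]
    ring
  simp only [mul_eq, Nat.odd_iff]
  split_ifs with h
  · rw [h.1, h.2, gen_one_sq, zero_mul]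
  · rw [vtMonomial]
    congr 2 <;> omega

/-- The parametrization `a ↦ a * vtMonomial K N m` by `A` of the degree-`m` component of `R K N`. -/
def mulVT (m : ℕ) : A K N →ₗ[K] R K N :=
  LinearMap.mulRight K (vtMonomial K N m) ∘ₗ (ofA K N).toLinearMap

theorem mulVT_apply (m : ℕ) (a : A K N) : mulVT K N m a = ofA K N a * vtMonomial K N m := rfl

theorem mulVT_root_pow (m i : ℕ) : mulVT K N m (AdjoinRoot.root _ ^ i) =
    gen K N 0 ^ i * (gen K N 1 ^ (m % 2) * gen K N 2 ^ (m / 2)) := by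
  rw [mulVT_apply, map_pow, ofA_root, vtMonomial]

theorem weight_eq (s : Fin 3 →₀ ℕ) :
    Finsupp.weight (![0, 1, 2] : Fin 3 → ℕ) s = s 1 + 2 * s 2 := by
  rw [Finsupp.weight_apply, Finsupp.sum_fintype _ _ (by simp), Fin.sum_univ_three]
  simp [mul_comm]

theorem gen_mul_mem_G {i j l m : ℕ} (h : j + 2 * l = m) :
    gen K N 0 ^ i * (gen K N 1 ^ j * gen K N 2 ^ l) ∈ G K N m := by
  let s : Fin 3 →₀ ℕ := Finsupp.equivFunOnFinite.symm ![i, j, l]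
  refine ⟨MvPolynomial.monomial s 1, ?_, (mk_monomial K N s 1).trans (one_smul _ _)⟩
  exact MvPolynomial.isWeightedHomogeneous_monomial _ _ _ ((weight_eq s).trans h)

theorem range_mulVT_le (m : ℕ) : LinearMap.range (mulVT K N m) ≤ G K N m := by
  rintro _ ⟨a, rfl⟩
  obtain ⟨P, rfl⟩ := AdjoinRoot.mk_surjective a
  rw [← AdjoinRoot.aeval_eq, aeval_eq_sum_range, map_sum]
  refine Submodule.sum_mem _ fun i _ => ?_
  rw [map_smul, mulVT_root_pow]
  exact Submodule.smul_mem _ _ (gen_mul_mem_G K N (Nat.mod_add_div m 2))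

theorem G_le_range_mulVT (m : ℕ) : G K N m ≤ LinearMap.range (mulVT K N m) := by
  rintro _ ⟨P, hP, rfl⟩
  rw [P.as_sum, map_sum]
  refine Submodule.sum_mem _ fun s hs => ?_
  have hs : s 1 + 2 * s 2 = m := (weight_eq s).symm.trans (hP (MvPolynomial.mem_support_iff.1 hs))
  rw [AlgHom.toLinearMap_apply, mk_monomial]
  refine Submodule.smul_mem _ _ ?_
  by_cases hv : 2 ≤ s 1
  · rw [pow_eq_zero_of_le hv (gen_one_sq K N), zero_mul, mul_zero]
    exact Submodule.zero_mem _
  · refine ⟨AdjoinRoot.root _ ^ s 0, ?_⟩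
    rw [mulVT_root_pow, show m % 2 = s 1 by omega, show m / 2 = s 2 by omega]

/-- The images of `x, v, t` under the detecting homomorphism `toDualNumberPolynomial`. -/
def dualNumberGen : Fin 3 → (DualNumber (A K N))[X] :=
  ![C (TrivSqZeroExt.inl (AdjoinRoot.root _)), C DualNumber.eps, X]

theorem I_le_ker_aeval_dualNumberGen :
    I K N ≤ RingHom.ker (MvPolynomial.aeval (R := K) (dualNumberGen K N)) := by
  rw [I, Ideal.span_le]
  rintro _ (rfl | rfl)
  · have C_inl_root_pow :
        C (TrivSqZeroExt.inl (AdjoinRoot.root _) : DualNumber (A K N)) ^ N = 0 := by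
      rw [← C_pow, TrivSqZeroExt.inl_pow, root_pow_eq_zero, TrivSqZeroExt.inl_zero, C_0]
    simpa [dualNumberGen] using C_inl_root_pow
  · simp [dualNumberGen, sq, ← C_mul]

/-- The homomorphism from `R K N` to polynomials over `A[ε]` given by `x ↦ x`, `v ↦ ε`, `t ↦ X`. It
detects that multiples of `vtMonomial K N m` by nonzero elements of `A` are nonzero. -/
def toDualNumberPolynomial : R K N →ₐ[K] (DualNumber (A K N))[X] :=
  Ideal.Quotient.liftₐ (I K N) (MvPolynomial.aeval (dualNumberGen K N))
    fun _ hP => I_le_ker_aeval_dualNumberGen K N hP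

theorem toDualNumberPolynomial_gen (i : Fin 3) :
    toDualNumberPolynomial K N (gen K N i) = dualNumberGen K N i :=
  MvPolynomial.aeval_X _ i

theorem toDualNumberPolynomial_ofA (a : A K N) :
    toDualNumberPolynomial K N (ofA K N a) = C (TrivSqZeroExt.inl a) := by
  have comp_eq : (toDualNumberPolynomial K N).comp (ofA K N) =
      CAlgHom.comp (TrivSqZeroExt.inlAlgHom K (A K N) (A K N)) :=
    AdjoinRoot.algHom_ext (by simp [ofA_root, toDualNumberPolynomial_gen, dualNumberGen])
  exact DFunLike.congr_fun comp_eq a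

theorem toDualNumberPolynomial_vtMonomial (m : ℕ) :
    toDualNumberPolynomial K N (vtMonomial K N m) = C (DualNumber.eps ^ (m % 2)) * X ^ (m / 2) := by
  simp [vtMonomial, toDualNumberPolynomial_gen, dualNumberGen]

theorem mulVT_injective (m : ℕ) : Function.Injective (mulVT K N m) := by
  rw [← LinearMap.ker_eq_bot, LinearMap.ker_eq_bot']
  intro a ha
  have inl_mul_eps_pow :
      TrivSqZeroExt.inl a * DualNumber.eps ^ (m % 2) = (0 : DualNumber (A K N)) := by
    have h := congrArg (toDualNumberPolynomial K N) ha
    rw [mulVT_apply, map_mul, toDualNumberPolynomial_ofA, toDualNumberPolynomial_vtMonomial,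
      ← mul_assoc, ← C_mul, map_zero] at h
    simpa only [coeff_C_mul, coeff_X_pow_self, mul_one, coeff_zero] using
      congrArg (coeff · (m / 2)) h
  rcases Nat.mod_two_eq_zero_or_one m with hm | hm <;> rw [hm] at inl_mul_eps_pow
  · simpa using congrArg TrivSqZeroExt.fst inl_mul_eps_pow
  · simpa using congrArg TrivSqZeroExt.snd inl_mul_eps_pow

/-- `mulVT K N m` as an isomorphism of `A` onto the degree-`m` component of `R K N`. -/
def equivG (m : ℕ) : A K N ≃ₗ[K] G K N m :=
  (LinearEquiv.ofInjective _ (mulVT_injective K N m)).trans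
    (LinearEquiv.ofEq _ _ ((range_mulVT_le K N m).antisymm (G_le_range_mulVT K N m)))

theorem coe_equivG (m : ℕ) (a : A K N) :
    (equivG K N m a : R K N) = ofA K N a * vtMonomial K N m := rfl

theorem equivG_mul (a b : ℕ) (x y : A K N) :
    (equivG K N a x * equivG K N b y : R K N) =
      if Odd a ∧ Odd b then 0 else (equivG K N (a + b) (x * y) : R K N) := by
  rw [coe_equivG, coe_equivG, coe_equivG, mul_mul_mul_comm, ← map_mul, vtMonomial_mul,
    mul_ite, mul_zero]

end GradedRing

section HochschildRing

theorem dvd_choose_two {m n : ℕ} (hm : m.Coprime 2) (hmn : m ∣ n) : m ∣ n.choose 2 := by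
  refine hm.dvd_of_dvd_mul_right ?_
  rw [Nat.choose_two_right, Nat.div_two_mul_two_of_even (Nat.even_mul_pred_self n)]
  exact hmn.mul_right _

theorem stmt10_general (K : Type) [Field K] (N : ℕ) (hN : (N : K) = 0)
    (hN₂ : (N.choose 2 : K) = 0) :
    ∃ e : ∀ m : ℕ, Abelian.Ext (M K N) (M K N) m ≃+ G K N m,
      ((e 0 (Abelian.Ext.mk₀ (𝟙 (M K N))) : R K N) = 1) ∧
      ∀ (a b : ℕ) (α : Abelian.Ext (M K N) (M K N) a) (β : Abelian.Ext (M K N) (M K N) b),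
        ((e (a + b) (α.comp β rfl) : R K N) = (e a α : R K N) * (e b β : R K N)) := by
  obtain ⟨Φ, Φ_one, Φ_mul⟩ := exists_linearEquiv_ext_M K N hN hN₂
  refine ⟨fun m => (Φ m).symm.toAddEquiv.trans (equivG K N m).toAddEquiv, ?_, fun a b α β => ?_⟩
  · change (equivG K N 0 ((Φ 0).symm (Abelian.Ext.mk₀ (𝟙 (M K N)))) : R K N) = 1
    rw [← Φ_one, LinearEquiv.symm_apply_apply, coe_equivG, map_one, vtMonomial_zero, one_mul]
  · obtain ⟨x, rfl⟩ := (Φ a).surjective α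
    obtain ⟨y, rfl⟩ := (Φ b).surjective β
    change (equivG K N (a + b) ((Φ (a + b)).symm ((Φ a x).comp (Φ b y) rfl)) : R K N) =
      equivG K N a ((Φ a).symm (Φ a x)) * equivG K N b ((Φ b).symm (Φ b y))
    rw [LinearEquiv.symm_apply_apply, LinearEquiv.symm_apply_apply, equivG_mul, Φ_mul]
    split_ifs
    · rw [map_zero, map_zero, ZeroMemClass.coe_zero]
    · rw [LinearEquiv.symm_apply_apply]

end HochschildRing

/-- for a field `K` of odd prime characteristic `p` and `A = K[x]/(x^{kp})`
with `k ≥ 1`, the graded ring `HH^*(A;A) = ⊕ₘ Ext^m_B(A,A)` with the Yoneda (composition)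
product is isomorphic as a graded ring to `K[x,v,t]/(x^{kp}, v²)` with `x, v, t` in
degrees `0, 1, 2`. -/
theorem stmt10 (K : Type) [Field K] (p : ℕ) (hp : p.Prime) (hp2 : p ≠ 2) [CharP K p]
    (k : ℕ) (hk : 1 ≤ k) :
    ∃ e : ∀ m : ℕ, Abelian.Ext (M K (k * p)) (M K (k * p)) m ≃+ G K (k * p) m,
      ((e 0 (Abelian.Ext.mk₀ (𝟙 (M K (k * p)))) : R K (k * p)) = 1) ∧
      ∀ (a b : ℕ) (α : Abelian.Ext (M K (k * p)) (M K (k * p)) a)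
        (β : Abelian.Ext (M K (k * p)) (M K (k * p)) b),
        ((e (a + b) (α.comp β rfl) : R K (k * p)) =
          (e a α : R K (k * p)) * (e b β : R K (k * p))) :=
  stmt10_general K (k * p) (by simp) <| (CharP.cast_eq_zero_iff K p _).2 <|
    dvd_choose_two ((Nat.coprime_primes hp Nat.prime_two).2 hp2) (dvd_mul_left p k)

end
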